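/- Fix δ > 0 and consider the once-reinforced random walk with reinforcement parameter δ on the infinite binary tree (vertices identified with finite binary words, root the empty word, edges between each word and its one-letter extensions), started at the root. Then with positive probability the walk never returns to the root after time 0 (the walk is transient). -/

import Mathlib

open MeasureTheory
open scoped Classical

/-- The neighbors of a vertex of the infinite binary tree, whose vertices are finite binary
words (the root is the empty word): the two one-letter extensions (children), and, for a
nonempty word, also its tail (parent). -/
noncomputable def binNbrs (ν : List (Fin 2)) : Finset (List (Fin 2)) :=
  if ν = [] then {[0], [1]} else {(0 : Fin 2) :: ν, (1 : Fin 2) :: ν, ν.tail}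

/-- The edge `{ν, μ}` has been traversed during the first `k` steps of the path `a`. -/
def binTraversed (a : ℕ → List (Fin 2)) (k : ℕ) (ν μ : List (Fin 2)) : Prop :=
  ∃ j < k, (a j = ν ∧ a (j + 1) = μ) ∨ (a j = μ ∧ a (j + 1) = ν)

/-- The weight, after `k` steps of the path `a`, of the edge joining the current vertex `a k`
to `μ`: it is `δ` if this edge has already been traversed and `1` otherwise. -/
noncomputable def binWeight (δ : ℝ) (a : ℕ → List (Fin 2)) (k : ℕ) (μ : List (Fin 2)) : ℝ :=
  if binTraversed a k (a k) μ then δ else 1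

/-- One-step transition probability of the once-reinforced random walk with reinforcement
parameter `δ` on the binary tree: given the history `a 0, …, a k`, the walk jumps from `a k`
to a neighbor with probability proportional to the current weights of the incident edges. -/
noncomputable def binStep (δ : ℝ) (a : ℕ → List (Fin 2)) (k : ℕ) (μ : List (Fin 2)) : ℝ :=
  (if μ ∈ binNbrs (a k) then binWeight δ a k μ else 0)
    / ∑ η ∈ binNbrs (a k), binWeight δ a k η

/-!
The proof exhibits a function of (visited tree `T`, current vertex `x`) that is a supermartingale
for the walk away from the root, is nonnegative, equals `1` at the root and is less than `1` just
after the first step. It therefore bounds the probability of ever returning to the root.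

*One path.* On a path with vertices `0, 1, …, N + 1`, the walk restricted to the path, which has
explored it up to `m` and stands at `j ≤ m`, reaches `N + 1` before `0` with probability
`(j / m) * ∏_{n = m}^{N} n / (n + δ)`: if `j < m` the walk is symmetric there, and at the frontier
`m` it advances for the first time before hitting `0` with probability `m / (m + δ)`. On the tree,
the same expression, with `j` and `m` read off along the path from the parent of `v` to a descendant
`w` of `v`, is a martingale while the walk is in the subtree of `v` (`reach_harmonic`).

*One block.* Summing over the `2 ^ N` descendants `w` of `v` that are `N` levels below `v`, the
expected number of `w` reached before the parent of `v` is `E = 2 ^ N ∏_{n = 1}^{N} n / (n + δ)`.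
Since the product decays only polynomially, `E > 1` for some `N` (`exists_block`).

*Nesting the blocks.* Every `w` reached starts a new block. Let `score` be the expected number of
`w` that are still to be reached in the block of `v`, and take for potential
`∏_v (1 - q * score T v x)` over the nonempty ancestors `v` of `x` (including `x`) whose level is
`1` modulo `N`. Within a block only the last factor changes, and does so as a martingale. When a
new `w` is reached, the score `A` of its block loses the contribution `1` of `w`, but a factor
`1 - q * E` appears, and `(1 - q * A) * (1 - q * E) ≤ 1 - q * (A + 1)` holds for the
choice `q = (E - 1) / (E * 2 ^ N)`, because `A ≤ 2 ^ N`. Hence the potential is a supermartingale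
(`pot_super`, `step_super`), and induction on the time horizon gives `return_le`.
-/

namespace ORRW

/-! ### Explored depth along a path and reaching probabilities -/

/-- The length of the longest suffix of `w` lying in `S`, i.e. the level of the deepest ancestor of
`w` (or `w` itself) in `S`; it is `0` if there is none. For `S = T` this is how far the path from
the root to `w` has been explored, and for `S` the set of suffixes of `x` it is the level of the
projection of `x` on that path. -/
noncomputable def deepest (S : Set (List (Fin 2))) : List (Fin 2) → ℕ
  | [] => 0
  | c :: w => if c :: w ∈ S then w.length + 1 else deepest S w

/-- The probability that a once-reinforced walk on the path `0, 1, …, N + 1`, standing for the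
first time at `m`, reaches `N + 1` before `0`. -/
noncomputable def hit (δ : ℝ) (N m : ℕ) : ℝ := ∏ n ∈ Finset.Ico m (N + 1), (n : ℝ) / (n + δ)

/-- The probability of reaching the unvisited vertex `w` before the parent of `v`, for the walk
with visited set `T` at `x`, restricted to the path from the parent of `v` to `w`. Positions on
this path are counted from the parent of `v`, at level `v.length - 1`. The value is `0` when `w` has
already been visited. -/
noncomputable def reach (δ : ℝ) (N : ℕ) (T : Set (List (Fin 2))) (v x w : List (Fin 2)) : ℝ :=
  if w ∈ T then 0 else
    ((deepest {s | s <:+ x} w : ℝ) + 1 - v.length) / ((deepest T w : ℝ) + 1 - v.length)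
      * hit δ N (deepest T w + 1 - v.length)

/-- The expected number of vertices `N` levels below `v` that are still to be reached before the
parent of `v`. Since words grow at the head, the descendants of `v` are the words `u ++ v`. -/
noncomputable def score (δ : ℝ) (N : ℕ) (T : Set (List (Fin 2))) (v x : List (Fin 2)) : ℝ :=
  ∑ u : Fin N → Fin 2, reach δ N T v x (List.ofFn u ++ v)

/-- `T` contains the parent of each of its nonempty elements; with `T` nonempty, it is a subtree
containing the root. -/
def Closed (T : Set (List (Fin 2))) : Prop := ∀ (c : Fin 2) (z : List (Fin 2)), c :: z ∈ T → z ∈ T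

/-- The product of the block factors `1 - q * score T v x` over the nonempty suffixes `v` of `z`
whose length is `1` modulo `N`. For `z = x` this is the potential of the walk with visited set
`T` at `x`, an upper bound for the probability of returning to the root. Separating `z`
from `x` allows `x` to move while the set of blocks stays fixed. -/
noncomputable def pot (δ : ℝ) (N : ℕ) (q : ℝ) (T : Set (List (Fin 2))) (x : List (Fin 2)) :
    List (Fin 2) → ℝ
  | [] => 1
  | c :: z => pot δ N q T x z *
      (if N ∣ z.length then 1 - q * score δ N T (c :: z) x else 1)

lemma Closed.suffix {T : Set (List (Fin 2))} (hT : Closed T) {s t : List (Fin 2)}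
    (hst : s <:+ t) (ht : t ∈ T) : s ∈ T := by
  induction t with
  | nil => rw [List.suffix_nil] at hst; exact hst ▸ ht
  | cons c t ih =>
    rcases List.suffix_cons_iff.1 hst with h | h
    · exact h ▸ ht
    · exact ih h (hT _ _ ht)

lemma Closed.insert {T : Set (List (Fin 2))} (hT : Closed T) {x : List (Fin 2)} (hx : x ∈ T)
    (c : Fin 2) : Closed (insert (c :: x) T) := by
  rintro d z (h | h)
  · right; simp only [List.cons.injEq] at h; exact h.2 ▸ hx
  · right; exact hT _ _ h

lemma deepest_congr {S S' : Set (List (Fin 2))} {w : List (Fin 2)}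
    (h : ∀ s, s <:+ w → (s ∈ S ↔ s ∈ S')) : deepest S w = deepest S' w := by
  induction w with
  | nil => rfl
  | cons c w ih =>
    simp only [deepest]
    rw [ih fun s hs => h s (hs.trans (List.suffix_cons _ _))]
    simp only [h (c :: w) List.suffix_rfl]

lemma deepest_eq {S : Set (List (Fin 2))} {w z : List (Fin 2)} (hz : z ∈ S) (hzw : z <:+ w)
    (hmax : ∀ s ∈ S, s <:+ w → s.length ≤ z.length) : deepest S w = z.length := by
  induction w with
  | nil => rw [List.suffix_nil] at hzw; subst hzw; rfl
  | cons c w ih =>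
    simp only [deepest]
    rcases List.suffix_cons_iff.1 hzw with h | h
    · subst h; simp [hz]
    · rw [if_neg, ih h fun s hs hsw => hmax s hs (hsw.trans (List.suffix_cons _ _))]
      intro hm
      have h1 := hmax _ hm List.suffix_rfl
      have h2 := h.length_le
      simp at h1; omega

lemma le_deepest {S : Set (List (Fin 2))} {w z : List (Fin 2)} (hz : z ∈ S) (hzw : z <:+ w) :
    z.length ≤ deepest S w := by
  induction w with
  | nil => rw [List.suffix_nil] at hzw; subst hzw; simp
  | cons c w ih =>
    simp only [deepest]
    split_ifs with hm
    · simpa using hzw.length_le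
    · rcases List.suffix_cons_iff.1 hzw with h | h
      · exact absurd (h ▸ hz) hm
      · exact ih h

lemma deepest_mono {S S' : Set (List (Fin 2))} (h : S ⊆ S') (w : List (Fin 2)) :
    deepest S w ≤ deepest S' w := by
  induction w with
  | nil => simp [deepest]
  | cons c w ih =>
    simp only [deepest]
    have hle : deepest S' w ≤ w.length := by
      clear ih
      induction w with
      | nil => simp [deepest]
      | cons d w ih => simp only [deepest]; split_ifs <;> simp; omega
    by_cases h1 : c :: w ∈ S
    · rw [if_pos h1, if_pos (h h1)]
    · rw [if_neg h1]; split_ifs <;> omega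

lemma deepest_suffix {x w : List (Fin 2)} (h : x <:+ w) : deepest {s | s <:+ x} w = x.length :=
  deepest_eq (S := {s | s <:+ x}) List.suffix_rfl h fun _ hs _ => List.IsSuffix.length_le hs

lemma hit_top (δ : ℝ) (N : ℕ) : hit δ N (N + 1) = 1 := by simp [hit]

lemma hit_step (δ : ℝ) {N m : ℕ} (h : m ≤ N) :
    hit δ N m = (m : ℝ) / (m + δ) * hit δ N (m + 1) := by
  rw [hit, Finset.prod_eq_prod_Ico_succ_bot (by omega)]; rfl

lemma hit_mem {δ : ℝ} (hδ : 0 < δ) (N m : ℕ) : 0 ≤ hit δ N m ∧ hit δ N m ≤ 1 := by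
  constructor
  · exact Finset.prod_nonneg fun n _ => by positivity
  · exact Finset.prod_le_one (fun n _ => by positivity) fun n _ =>
      div_le_one_of_le₀ (by linarith) (by positivity)

lemma reach_mem {δ : ℝ} (hδ : 0 < δ) (N : ℕ) {T : Set (List (Fin 2))} (hT : Closed T)
    {v x w : List (Fin 2)} (hx : x ∈ T) (hvx : v <:+ x) (hvw : v <:+ w) :
    0 ≤ reach δ N T v x w ∧ reach δ N T v x w ≤ 1 := by
  unfold reach
  split_ifs with hw
  · simp
  · have h1 : v.length ≤ deepest {s | s <:+ x} w := le_deepest (S := {s | s <:+ x}) hvx hvw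
    have h2 : deepest {s | s <:+ x} w ≤ deepest T w :=
      deepest_mono (fun s hs => hT.suffix hs hx) w
    have h1' : (v.length : ℝ) ≤ deepest {s | s <:+ x} w := by exact_mod_cast h1
    have h2' : (deepest {s | s <:+ x} w : ℝ) ≤ deepest T w := by exact_mod_cast h2
    obtain ⟨h3, h4⟩ := hit_mem hδ N (deepest T w + 1 - v.length)
    have h5 : 0 ≤ ((deepest {s | s <:+ x} w : ℝ) + 1 - v.length) /
        ((deepest T w : ℝ) + 1 - v.length) := div_nonneg (by linarith) (by linarith)
    have h6 : ((deepest {s | s <:+ x} w : ℝ) + 1 - v.length) /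
        ((deepest T w : ℝ) + 1 - v.length) ≤ 1 := div_le_one_of_le₀ (by linarith) (by linarith)
    exact ⟨mul_nonneg h5 h3, mul_le_one₀ h6 h3 h4⟩

/-- A step of the walk away from the path to `w` leaves the reaching probability unchanged. -/
lemma reach_child_off (δ : ℝ) (N : ℕ) {T : Set (List (Fin 2))} {v x w : List (Fin 2)} {c : Fin 2}
    (h : ¬ (c :: x <:+ w)) : reach δ N (insert (c :: x) T) v (c :: x) w = reach δ N T v x w := by
  have h1 : deepest {s | s <:+ c :: x} w = deepest {s | s <:+ x} w := by
    apply deepest_congr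
    intro s hs
    simp only [Set.mem_ofPred_eq, List.suffix_cons_iff]
    constructor
    · rintro (h' | h')
      · exact absurd (h' ▸ hs) h
      · exact h'
    · exact Or.inr
  have h2 : deepest (insert (c :: x) T) w = deepest T w := by
    apply deepest_congr
    intro s hs
    simp only [Set.mem_insert_iff]
    constructor
    · rintro (h' | h')
      · exact absurd (h' ▸ hs) h
      · exact h'
    · exact Or.inr
  have h3 : w ∈ insert (c :: x) T ↔ w ∈ T := by
    simp only [Set.mem_insert_iff, or_iff_right_iff_imp]
    intro h'
    exact absurd (h' ▸ List.suffix_rfl) h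
  simp only [reach, h1, h2, h3]

lemma reach_parent_off (δ : ℝ) (N : ℕ) {T : Set (List (Fin 2))} {v z w : List (Fin 2)} {d : Fin 2}
    (h : ¬ (d :: z <:+ w)) : reach δ N T v z w = reach δ N T v (d :: z) w := by
  have h1 : deepest {s | s <:+ d :: z} w = deepest {s | s <:+ z} w := by
    apply deepest_congr
    intro s hs
    simp only [Set.mem_ofPred_eq, List.suffix_cons_iff]
    constructor
    · rintro (h' | h')
      · exact absurd (h' ▸ hs) h
      · exact h'
    · exact Or.inr
  simp only [reach, h1]

/-- The value of `reach` after a step to the child `y`, where reaching `w` at this very step counts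
as `1` (whereas `reach` gives `0` to a visited `w`). -/
noncomputable def reach' (δ : ℝ) (N : ℕ) (T : Set (List (Fin 2))) (v y w : List (Fin 2)) : ℝ :=
  reach δ N (insert y T) v y w + if y = w ∧ y ∉ T then 1 else 0

lemma reach'_off (δ : ℝ) (N : ℕ) {T : Set (List (Fin 2))} {v x w : List (Fin 2)} {c : Fin 2}
    (h : ¬ (c :: x <:+ w)) : reach' δ N T v (c :: x) w = reach δ N T v x w := by
  rw [reach', reach_child_off δ N h, if_neg, add_zero]
  rintro ⟨h', -⟩
  exact h (h' ▸ List.suffix_rfl)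

/-- The martingale identity at a vertex of the path to `w`, whose only neighbors on that path are
`c :: d :: z` and `z`. If the edge upwards is new this is the recursion
`hit m = m / (m + δ) * hit (m + 1)`; otherwise both edges have weight `δ` and `reach` is affine. -/
lemma reach'_on {δ : ℝ} (hδ : 0 < δ) {N : ℕ} {T : Set (List (Fin 2))} (hT : Closed T)
    {v z w : List (Fin 2)} {c d : Fin 2} (hx : d :: z ∈ T) (hw : w ∉ T)
    (hvx : v <:+ d :: z) (hwl : w.length = v.length + N)
    (h : c :: d :: z <:+ w) :
    (if c :: d :: z ∈ T then δ else 1) *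
      (reach' δ N T v (c :: d :: z) w - reach δ N T v (d :: z) w)
      = δ * (reach δ N T v (d :: z) w - reach δ N T v z w) := by
  have hxw : d :: z <:+ w := (List.suffix_cons _ _).trans h
  have hzw : z <:+ w := (List.suffix_cons _ _).trans hxw
  have hl := h.length_le
  have hvl := hvx.length_le
  simp only [List.length_cons] at hl hvl
  by_cases hy : c :: d :: z ∈ T
  · have h1 : (z.length + 1 + 1 : ℕ) ≤ deepest T w := le_deepest hy h
    have h1' : ((z.length + 1 + 1 : ℕ) : ℝ) ≤ deepest T w := by exact_mod_cast h1
    have hvl' : (v.length : ℝ) ≤ ((z.length + 1 : ℕ) : ℝ) := by exact_mod_cast hvl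
    push_cast at h1' hvl'
    have h0 : (deepest T w : ℝ) + 1 - v.length ≠ 0 := by
      intro h0; linarith
    rw [if_pos hy, reach', Set.insert_eq_of_mem hy, if_neg (by tauto), add_zero]
    simp only [reach, if_neg hw, deepest_suffix h, deepest_suffix hxw, deepest_suffix hzw,
      List.length_cons]
    push_cast
    field_simp
    ring
  · have hTx : deepest T w = z.length + 1 := by
      refine deepest_eq hx hxw fun s hs hsw => ?_
      by_contra hlt
      push Not at hlt
      exact hy (hT.suffix (List.suffix_of_suffix_length_le h hsw (by simpa using hlt)) hs)
    have hIx : deepest (insert (c :: d :: z) T) w = z.length + 2 := by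
      refine deepest_eq (Set.mem_insert _ _) h fun s hs hsw => ?_
      rcases hs with hs | hs
      · exact hs ▸ le_rfl
      · by_contra hlt
        push Not at hlt
        exact hy (hT.suffix (List.suffix_of_suffix_length_le h hsw hlt.le) hs)
    obtain ⟨m, hm⟩ : ∃ m, z.length + 1 = v.length + m := ⟨_, (Nat.add_sub_of_le hvl).symm⟩
    have hmR : (z.length : ℝ) + 1 = v.length + m := by exact_mod_cast hm
    have key : reach' δ N T v (c :: d :: z) w = hit δ N (m + 2) := by
      rw [reach']
      by_cases hyw : c :: d :: z = w
      · rw [if_pos ⟨hyw, hy⟩, reach, if_pos (by rw [hyw]; exact Set.mem_insert _ _), zero_add]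
        have : m + 2 = N + 1 := by
          rw [← hyw] at hwl; simp only [List.length_cons] at hwl; omega
        rw [this, hit_top]
      · rw [if_neg (by tauto), add_zero, reach, if_neg, deepest_suffix h, hIx]
        · rw [show z.length + 2 + 1 - v.length = m + 2 by omega]
          simp only [List.length_cons]
          push_cast
          rw [show (z.length : ℝ) + 1 + 1 + 1 - v.length = m + 2 by linarith,
            show (z.length : ℝ) + 2 + 1 - v.length = m + 2 by linarith, div_self, one_mul]
          positivity
        · rintro (h' | h')
          · exact hyw h'.symm
          · exact hw h'
    rw [key, if_neg hy]
    simp only [reach, if_neg hw, deepest_suffix hxw, deepest_suffix hzw, hTx, List.length_cons]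
    rw [show z.length + 1 + 1 - v.length = m + 1 by omega, hit_step δ (m := m + 1) (by omega)]
    push_cast
    rw [show (z.length : ℝ) + 1 + 1 - v.length = m + 1 by linarith,
      show (z.length : ℝ) + 1 - v.length = m by linarith]
    have : (m : ℝ) + 1 ≠ 0 := by positivity
    have : (m : ℝ) + 1 + δ ≠ 0 := by positivity
    field_simp
    ring

/-- Unnormalized martingale property of the reaching probability: the expected increment, multiplied
by the total weight, vanishes. -/
lemma reach_harmonic {δ : ℝ} (hδ : 0 < δ) {N : ℕ} {T : Set (List (Fin 2))} (hT : Closed T)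
    {v z w : List (Fin 2)} {d : Fin 2} (hx : d :: z ∈ T)
    (hvx : v <:+ d :: z) (hwl : w.length = v.length + N) :
    ∑ c : Fin 2, (if c :: d :: z ∈ T then δ else 1) *
      (reach' δ N T v (c :: d :: z) w - reach δ N T v (d :: z) w)
      = δ * (reach δ N T v (d :: z) w - reach δ N T v z w) := by
  by_cases hw : w ∈ T
  · have : ∀ c : Fin 2, reach' δ N T v (c :: d :: z) w = 0 := by
      intro c
      rw [reach', reach, if_pos (Set.mem_insert_of_mem _ hw), if_neg, add_zero]
      rintro ⟨h, h'⟩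
      exact h' (h ▸ hw)
    simp [this, reach, hw]
  by_cases hxw : d :: z <:+ w
  · obtain ⟨c, hc⟩ : ∃ c : Fin 2, c :: d :: z <:+ w := by
      obtain ⟨t, rfl⟩ := hxw
      rcases List.eq_nil_or_concat t with rfl | ⟨t, c, rfl⟩
      · exact absurd hx hw
      · exact ⟨c, t, by simp⟩
    rw [Finset.sum_eq_single c, reach'_on hδ hT hx hw hvx hwl hc]
    · intro e _ hec
      rw [reach'_off, sub_self, mul_zero]
      intro he
      have := List.suffix_of_suffix_length_le he hc (by simp)
      have := this.eq_of_length (by simp)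
      simp at this
      exact hec this
    · simp
  · rw [reach_parent_off δ N hxw, sub_self, mul_zero]
    refine Finset.sum_eq_zero fun c _ => ?_
    rw [reach'_off, sub_self, mul_zero]
    exact fun h => hxw ((List.suffix_cons _ _).trans h)

/-! ### Scores and the potential -/

lemma score_mem {δ : ℝ} (hδ : 0 < δ) (N : ℕ) {T : Set (List (Fin 2))} (hT : Closed T)
    {v x : List (Fin 2)} (hx : x ∈ T) (hvx : v <:+ x) :
    0 ≤ score δ N T v x ∧ score δ N T v x ≤ 2 ^ N := by
  constructor
  · exact Finset.sum_nonneg fun u _ => (reach_mem hδ N hT hx hvx (List.suffix_append _ _)).1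
  · refine (Finset.sum_le_sum fun u _ =>
      (reach_mem hδ N hT hx hvx (List.suffix_append _ _)).2).trans ?_
    simp

/-- If the block of `v` ends at or above the level of the current vertex, its score is not
affected by a step: each target of that block is already visited or does not lie below the
current vertex. -/
lemma score_stale (δ : ℝ) (N : ℕ) {T : Set (List (Fin 2))} {v z : List (Fin 2)} {d : Fin 2}
    (hx : d :: z ∈ T) (hl : v.length + N ≤ z.length + 1) :
    (∀ c : Fin 2, score δ N (insert (c :: d :: z) T) v (c :: d :: z) = score δ N T v (d :: z)) ∧
      score δ N T v z = score δ N T v (d :: z) := by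
  have key : ∀ u : Fin N → Fin 2, List.ofFn u ++ v ∈ T ∨ ¬ (d :: z <:+ List.ofFn u ++ v) := by
    intro u
    by_contra! h
    exact h.1 (h.2.eq_of_length_le (by simp; omega) ▸ hx)
  constructor
  · intro c
    refine Finset.sum_congr rfl fun u _ => ?_
    rcases key u with h | h
    · rw [reach, reach, if_pos h, if_pos (Set.mem_insert_of_mem _ h)]
    · exact reach_child_off δ N fun h' => h ((List.suffix_cons _ _).trans h')
  · refine Finset.sum_congr rfl fun u _ => ?_
    rcases key u with h | h
    · rw [reach, reach, if_pos h, if_pos h]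
    · exact reach_parent_off δ N h

/-- The score of a block at the moment its top vertex `y` is first visited. -/
lemma score_fresh (δ : ℝ) {N : ℕ} (hN : 0 < N) {T : Set (List (Fin 2))} (hT : Closed T)
    {y : List (Fin 2)} (hy : y ∉ T) : score δ N (insert y T) y y = 2 ^ N * hit δ N 1 := by
  have : ∀ u : Fin N → Fin 2, reach δ N (insert y T) y y (List.ofFn u ++ y) = hit δ N 1 := by
    intro u
    have hsuf : y <:+ List.ofFn u ++ y := List.suffix_append _ _
    have hd : deepest (insert y T) (List.ofFn u ++ y) = y.length := by
      refine deepest_eq (Set.mem_insert _ _) hsuf fun s hs hsw => ?_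
      rcases hs with hs | hs
      · exact hs ▸ le_rfl
      · by_contra hlt
        push Not at hlt
        exact hy (hT.suffix (List.suffix_of_suffix_length_le hsuf hsw hlt.le) hs)
    rw [reach, if_neg, hd, deepest_suffix hsuf]
    · simp
    · rintro (h | h)
      · have := congrArg List.length h
        simp at this
        omega
      · exact hy (hT.suffix hsuf h)
  rw [score, Finset.sum_congr rfl fun u _ => this u]
  simp

/-- The score of a block vanishes at its ground, the parent of its top vertex. -/
lemma score_ground (δ : ℝ) (N : ℕ) (T : Set (List (Fin 2))) (z : List (Fin 2)) (d : Fin 2) :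
    score δ N T (d :: z) z = 0 := by
  refine Finset.sum_eq_zero fun u _ => ?_
  rw [reach, deepest_suffix ((List.suffix_cons _ _).trans (List.suffix_append _ _))]
  simp

lemma pot_congr {δ : ℝ} {N : ℕ} {q : ℝ} {T T' : Set (List (Fin 2))} {x x' z : List (Fin 2)}
    (h : ∀ c t, c :: t <:+ z → N ∣ t.length →
      score δ N T (c :: t) x = score δ N T' (c :: t) x') :
    pot δ N q T x z = pot δ N q T' x' z := by
  induction z with
  | nil => rfl
  | cons c z ih =>
    simp only [pot]
    rw [ih fun e t het => h e t (het.trans (List.suffix_cons _ _))]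
    split_ifs with hN
    · rw [h c z List.suffix_rfl hN]
    · rfl

lemma factor_mem {δ : ℝ} (hδ : 0 < δ) {N : ℕ} {q : ℝ} (hq : 0 ≤ q) (hq1 : q * 2 ^ N ≤ 1)
    {T : Set (List (Fin 2))} (hT : Closed T) {v x : List (Fin 2)} (hx : x ∈ T) (hvx : v <:+ x) :
    0 ≤ 1 - q * score δ N T v x ∧ 1 - q * score δ N T v x ≤ 1 := by
  obtain ⟨h1, h2⟩ := score_mem hδ N hT hx hvx
  have := mul_le_mul_of_nonneg_left h2 hq
  have := mul_nonneg hq h1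
  constructor <;> linarith

lemma pot_nonneg {δ : ℝ} (hδ : 0 < δ) {N : ℕ} {q : ℝ} (hq : 0 ≤ q) (hq1 : q * 2 ^ N ≤ 1)
    {T : Set (List (Fin 2))} (hT : Closed T) {x z : List (Fin 2)} (hx : x ∈ T) (hz : z <:+ x) :
    0 ≤ pot δ N q T x z := by
  induction z with
  | nil => simp [pot]
  | cons c z ih =>
    simp only [pot]
    refine mul_nonneg (ih ((List.suffix_cons _ _).trans hz)) ?_
    split_ifs
    · exact (factor_mem hδ hq hq1 hT hx hz).1
    · exact zero_le_one

/-- Only the factor of the innermost block, with top `e :: r`, changes in a step from `d :: t` to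
one of its children or to its parent. -/
lemma pot_factor {δ : ℝ} (hδ : 0 < δ) {N : ℕ} (hNpos : 0 < N) {q : ℝ} (hq : 0 ≤ q)
    (hq1 : q * 2 ^ N ≤ 1) {T : Set (List (Fin 2))} (hT : Closed T) {t : List (Fin 2)} {d : Fin 2}
    (hx : d :: t ∈ T) (z : List (Fin 2)) (hz : z <:+ d :: t) (hz0 : z ≠ []) :
    ∃ R : ℝ, 0 ≤ R ∧ ∃ e r, e :: r <:+ z ∧ N ∣ r.length ∧ z.length ≤ r.length + N ∧
      pot δ N q T (d :: t) z = R * (1 - q * score δ N T (e :: r) (d :: t)) ∧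
      (∀ c : Fin 2, pot δ N q (insert (c :: d :: t) T) (c :: d :: t) z
        = R * (1 - q * score δ N (insert (c :: d :: t) T) (e :: r) (c :: d :: t))) ∧
      pot δ N q T t z = R * (1 - q * score δ N T (e :: r) t) := by
  induction z with
  | nil => exact absurd rfl hz0
  | cons f z ih =>
    have hz' : z <:+ d :: t := (List.suffix_cons _ _).trans hz
    have hzl := hz.length_le
    simp only [List.length_cons] at hzl
    by_cases hN : N ∣ z.length
    · refine ⟨pot δ N q T (d :: t) z, pot_nonneg hδ hq hq1 hT hx hz', f, z, List.suffix_rfl, hN,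
        ?_, ?_, ?_, ?_⟩
      · simp only [List.length_cons]; omega
      · simp [pot, hN]
      all_goals
        have hst : ∀ c' t', c' :: t' <:+ z → N ∣ t'.length →
            (c' :: t').length + N ≤ t.length + 1 := by
          intro c' t' hs hd
          have h1 := hs.length_le
          simp only [List.length_cons] at h1 ⊢
          have h2 : N ∣ z.length - t'.length := Nat.dvd_sub hN hd
          have h3 := Nat.le_of_dvd (by omega) h2
          omega
      · intro c
        simp only [pot, hN, if_true]
        rw [pot_congr fun c' t' hs hd => (score_stale δ N hx (hst c' t' hs hd)).1 c]
      · simp only [pot, hN, if_true]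
        rw [pot_congr fun c' t' hs hd => (score_stale δ N hx (hst c' t' hs hd)).2]
    · have hz0' : z ≠ [] := by
        rintro rfl
        simp at hN
      obtain ⟨R, hR, e, r, h1, h2, h3, h4, h5, h6⟩ := ih hz' hz0'
      refine ⟨R, hR, e, r, h1.trans (List.suffix_cons _ _), h2, ?_, ?_, ?_, ?_⟩
      · have : z.length ≠ r.length + N := by
          intro h
          exact hN (h ▸ Nat.dvd_add h2 dvd_rfl)
        simp only [List.length_cons]
        omega
      · simp [pot, hN, h4]
      · simpa [pot, hN] using h5
      · simp [pot, hN, h6]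

/-- The vertex `y` is at most once of the form `u ++ v`. -/
lemma count_le {N : ℕ} (v y : List (Fin 2)) :
    (∑ u : Fin N → Fin 2, if y = List.ofFn u ++ v then (1 : ℝ) else 0) ≤ 1 := by
  by_cases h : ∃ u : Fin N → Fin 2, y = List.ofFn u ++ v
  · obtain ⟨u, hu⟩ := h
    rw [Finset.sum_eq_single u]
    · simp [hu]
    · intro u' _ hne
      rw [if_neg]
      intro hu'
      exact hne (List.ofFn_injective (List.append_cancel_right (hu'.symm.trans hu)))
    · simp
  · push Not at h
    simp [h]

/-- After a step to a child, the potential is at most `R * (1 - q * A)`, with `A` the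
martingale version of the score. The hypothesis `hqE` absorbs the new block that starts if the
child is a target visited for the first time. -/
lemma pot_child_le {δ : ℝ} (hδ : 0 < δ) {N : ℕ} (hN : 0 < N) {q : ℝ} (hq : 0 ≤ q)
    (hq1 : q * 2 ^ N ≤ 1)
    (hqE : ∀ A : ℝ, 0 ≤ A → A ≤ 2 ^ N →
      (1 - q * A) * (1 - q * (2 ^ N * hit δ N 1)) ≤ 1 - q * (A + 1))
    {T : Set (List (Fin 2))} (hT : Closed T) {t : List (Fin 2)} {c d e : Fin 2} {r : List (Fin 2)}
    (hx : d :: t ∈ T) {R : ℝ} (hR : 0 ≤ R) (hsuf : e :: r <:+ d :: t) (hr : N ∣ r.length)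
    (hfac : pot δ N q (insert (c :: d :: t) T) (c :: d :: t) (d :: t)
        = R * (1 - q * score δ N (insert (c :: d :: t) T) (e :: r) (c :: d :: t))) :
    pot δ N q (insert (c :: d :: t) T) (c :: d :: t) (c :: d :: t) ≤
      R * (1 - q * ∑ u : Fin N → Fin 2, reach' δ N T (e :: r) (c :: d :: t)
        (List.ofFn u ++ e :: r)) := by
  set y := c :: d :: t with hy
  have hT' : Closed (insert y T) := hT.insert hx c
  have hyT : y ∈ insert y T := Set.mem_insert _ _
  have hvy : e :: r <:+ y := hsuf.trans (List.suffix_cons _ _)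
  have hsum : ∑ u : Fin N → Fin 2, reach' δ N T (e :: r) y (List.ofFn u ++ e :: r)
      = score δ N (insert y T) (e :: r) y +
        ∑ u : Fin N → Fin 2, if y = List.ofFn u ++ e :: r ∧ y ∉ T then (1 : ℝ) else 0 := by
    simp only [reach', score, Finset.sum_add_distrib]
  obtain ⟨hs0, hs1⟩ := score_mem hδ N hT' hyT hvy
  obtain ⟨hf0, hf1⟩ := factor_mem hδ hq hq1 hT' hyT hvy
  have hpot : pot δ N q (insert y T) y y = R * ((1 - q * score δ N (insert y T) (e :: r) y) *
      (if N ∣ (d :: t).length then 1 - q * score δ N (insert y T) y y else 1)) := by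
    rw [← mul_assoc, ← hfac]
    rfl
  rw [hpot, hsum]
  refine mul_le_mul_of_nonneg_left ?_ hR
  by_cases hyT0 : y ∈ T
  · simp only [hyT0, not_true, and_false, if_false, Finset.sum_const_zero, add_zero]
    refine mul_le_of_le_one_right hf0 ?_
    split_ifs
    · exact (factor_mem hδ hq hq1 hT' hyT List.suffix_rfl).2
    · exact le_rfl
  by_cases hd : N ∣ (d :: t).length
  · simp only [hd, if_true, hyT0, not_false_eq_true, and_true]
    rw [score_fresh δ hN hT hyT0]
    refine (hqE _ hs0 hs1).trans ?_
    have := mul_le_mul_of_nonneg_left (count_le (N := N) (e :: r) y) hq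
    linarith
  · have : ∀ u : Fin N → Fin 2, ¬ (y = List.ofFn u ++ e :: r ∧ y ∉ T) := by
      rintro u ⟨h, -⟩
      have h' := congrArg List.length h
      simp only [hy, List.length_cons, List.length_append, List.length_ofFn] at h' hd
      apply hd
      rw [show t.length + 1 = N + r.length by omega]
      exact Nat.dvd_add dvd_rfl hr
    have hd' : ¬ N ∣ t.length + 1 := hd
    simp [this, hd']

/-- Unnormalized supermartingale property of the potential: a step from `d :: t` goes to the child
`c :: d :: t` with weight `δ` or `1` according to whether that child was visited, and to
the parent `t` with weight `δ`. -/
lemma pot_super {δ : ℝ} (hδ : 0 < δ) {N : ℕ} (hN : 0 < N) {q : ℝ} (hq : 0 ≤ q)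
    (hq1 : q * 2 ^ N ≤ 1)
    (hqE : ∀ A : ℝ, 0 ≤ A → A ≤ 2 ^ N →
      (1 - q * A) * (1 - q * (2 ^ N * hit δ N 1)) ≤ 1 - q * (A + 1))
    {T : Set (List (Fin 2))} (hT : Closed T) {t : List (Fin 2)} {d : Fin 2} (hx : d :: t ∈ T) :
    (∑ c : Fin 2, (if c :: d :: t ∈ T then δ else 1) *
        pot δ N q (insert (c :: d :: t) T) (c :: d :: t) (c :: d :: t)) + δ * pot δ N q T t t
      ≤ ((∑ c : Fin 2, if c :: d :: t ∈ T then δ else 1) + δ)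
          * pot δ N q T (d :: t) (d :: t) := by
  obtain ⟨R, hR, e, r, h1, h2, h3, h4, h5, h6⟩ :=
    pot_factor hδ hN hq hq1 hT hx (d :: t) List.suffix_rfl (by simp)
  have hpar : pot δ N q T t t = R * (1 - q * score δ N T (e :: r) t) := by
    rw [← h6]
    simp only [pot, score_ground]
    simp
  have hch := fun c : Fin 2 => pot_child_le hδ hN hq hq1 hqE hT hx hR h1 h2 (h5 c)
  have hharm : ∑ c : Fin 2, (if c :: d :: t ∈ T then δ else 1) *
      ((∑ u : Fin N → Fin 2, reach' δ N T (e :: r) (c :: d :: t) (List.ofFn u ++ e :: r))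
        - score δ N T (e :: r) (d :: t))
      = δ * (score δ N T (e :: r) (d :: t) - score δ N T (e :: r) t) := by
    simp only [score, ← Finset.sum_sub_distrib, Finset.mul_sum]
    rw [Finset.sum_comm]
    refine Finset.sum_congr rfl fun u _ => ?_
    exact reach_harmonic hδ hT hx h1 (by simp; omega)
  have hw : ∀ c : Fin 2, 0 ≤ (if c :: d :: t ∈ T then δ else 1) := by
    intro c; split_ifs <;> linarith
  have hm := fun c : Fin 2 => mul_le_mul_of_nonneg_left (hch c) (hw c)
  rw [hpar, h4]
  simp only [Fin.sum_univ_two] at hharm ⊢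
  have hm0 := hm 0
  have hm1 := hm 1
  have hR' := congrArg (fun s => R * q * s) hharm
  linarith

/-! ### Choice of the block length -/

lemma exists_block {δ : ℝ} (hδ : 0 < δ) : ∃ N : ℕ, 0 < N ∧ 1 < 2 ^ N * hit δ N 1 := by
  have hstep : ∀ N : ℕ, 2 ^ (N + 1) * hit δ (N + 1) 1
      = 2 * ((N + 1 : ℕ) / ((N + 1 : ℕ) + δ)) * (2 ^ N * hit δ N 1) := by
    intro N
    rw [hit, Finset.prod_Ico_succ_top (by omega), hit]
    ring
  have hpos : ∀ N : ℕ, 0 < 2 ^ N * hit δ N 1 := by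
    intro N
    refine mul_pos (by positivity) (Finset.prod_pos fun n hn => ?_)
    have : (0 : ℝ) < n := by exact_mod_cast (Finset.mem_Ico.1 hn).1
    positivity
  -- Beyond level `3 * δ` each further level multiplies the expectation by at least `3 / 2`.
  obtain ⟨K, hK⟩ := exists_nat_ge (3 * δ)
  have hgrow : ∀ k : ℕ, (3 / 2 : ℝ) ^ k * (2 ^ K * hit δ K 1) ≤ 2 ^ (K + k) * hit δ (K + k) 1 := by
    intro k
    induction k with
    | zero => simp
    | succ k ih =>
      rw [← add_assoc, hstep, pow_succ]
      have hr : (3 / 2 : ℝ) ≤ 2 * (((K + k + 1 : ℕ) : ℝ) / ((K + k + 1 : ℕ) + δ)) := by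
        push_cast
        rw [← mul_div_assoc, le_div_iff₀ (by positivity)]
        have : (0 : ℝ) ≤ k := by positivity
        linarith
      calc _ = (3 / 2 : ℝ) * ((3 / 2 : ℝ) ^ k * (2 ^ K * hit δ K 1)) := by ring
        _ ≤ _ := mul_le_mul hr ih (by have := hpos K; positivity) (by positivity)
  obtain ⟨k, hk⟩ := pow_unbounded_of_one_lt (1 / (2 ^ K * hit δ K 1)) (by norm_num : (1 : ℝ) < 3 / 2)
  have h1 : 1 < 2 ^ (K + k) * hit δ (K + k) 1 := by
    refine lt_of_lt_of_le ?_ (hgrow k)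
    rwa [div_lt_iff₀ (hpos K)] at hk
  refine ⟨K + k, Nat.pos_of_ne_zero fun h0 => ?_, h1⟩
  rw [h0, show hit δ 0 1 = 1 from hit_top δ 0] at h1
  norm_num at h1

lemma exists_params {δ : ℝ} (hδ : 0 < δ) : ∃ N : ℕ, 0 < N ∧ ∃ q : ℝ, 0 < q ∧ q * 2 ^ N ≤ 1 ∧
    0 < hit δ N 1 ∧
    ∀ A : ℝ, 0 ≤ A → A ≤ 2 ^ N →
      (1 - q * A) * (1 - q * (2 ^ N * hit δ N 1)) ≤ 1 - q * (A + 1) := by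
  obtain ⟨N, hN, hE⟩ := exists_block hδ
  set E := 2 ^ N * hit δ N 1 with hEdef
  have h2 : (0 : ℝ) < 2 ^ N := by positivity
  have hE0 : 0 < E := by linarith
  have hqE : (E - 1) / (E * 2 ^ N) * 2 ^ N * E = E - 1 := by field_simp
  have hq : 0 < (E - 1) / (E * 2 ^ N) := div_pos (by linarith) (by positivity)
  refine ⟨N, hN, (E - 1) / (E * 2 ^ N), hq, ?_, ?_, ?_⟩
  · rw [div_mul_eq_mul_div, div_le_one (by positivity)]
    nlinarith
  · by_contra! h
    have := mul_nonpos_of_nonneg_of_nonpos h2.le h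
    linarith
  · intro A hA hA'
    set q := (E - 1) / (E * 2 ^ N)
    have h3 : q * A * E ≤ E - 1 := by
      rw [← hqE]
      gcongr
    nlinarith [mul_le_mul_of_nonneg_left h3 hq.le]

/-! ### Paths of the walk -/

/-- The vertices visited by the path `a` up to time `k`. -/
def visited (a : ℕ → List (Fin 2)) (k : ℕ) : Set (List (Fin 2)) := {s | ∃ j ≤ k, a j = s}

lemma visited_succ (a : ℕ → List (Fin 2)) (k : ℕ) :
    visited a (k + 1) = insert (a (k + 1)) (visited a k) := by
  ext s
  simp only [visited, Set.mem_insert_iff, Set.mem_ofPred_eq]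
  constructor
  · rintro ⟨j, hj, rfl⟩
    rcases Nat.le_succ_iff.1 hj with h | h
    · exact Or.inr ⟨j, h, rfl⟩
    · exact Or.inl (by rw [h])
  · rintro (rfl | ⟨j, hj, rfl⟩)
    · exact ⟨k + 1, le_rfl, rfl⟩
    · exact ⟨j, by omega, rfl⟩

/-- The first `k` steps of `a` form a nearest-neighbor path from the root. -/
def IsPath (a : ℕ → List (Fin 2)) (k : ℕ) : Prop :=
  a 0 = [] ∧ ∀ j < k, a (j + 1) ∈ binNbrs (a j)

lemma mem_nbrs {x y : List (Fin 2)} (h : y ∈ binNbrs x) :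
    (∃ c : Fin 2, y = c :: x) ∨ ∃ d : Fin 2, x = d :: y := by
  unfold binNbrs at h
  split_ifs at h with hx
  · subst hx
    simp only [Finset.mem_insert, Finset.mem_singleton] at h
    rcases h with rfl | rfl
    · exact Or.inl ⟨0, rfl⟩
    · exact Or.inl ⟨1, rfl⟩
  · simp only [Finset.mem_insert, Finset.mem_singleton] at h
    rcases h with rfl | rfl | rfl
    · exact Or.inl ⟨0, rfl⟩
    · exact Or.inl ⟨1, rfl⟩
    · obtain ⟨d, z, rfl⟩ := List.exists_cons_of_ne_nil hx
      exact Or.inr ⟨d, rfl⟩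

lemma visited_mem (a : ℕ → List (Fin 2)) (k : ℕ) : a k ∈ visited a k := ⟨k, le_rfl, rfl⟩

/-- The visited set is a subtree, and the edge from each visited nonroot vertex to its parent has
been traversed in the direction away from the root. Hence edges are traversed exactly when their endpoint
farther from the root is visited. -/
lemma visited_spec {a : ℕ → List (Fin 2)} {k : ℕ} (h : IsPath a k) :
    Closed (visited a k) ∧
      ∀ (c : Fin 2) (z : List (Fin 2)), c :: z ∈ visited a k → ∃ j < k, a j = z ∧ a (j + 1) = c :: z := by
  induction k with
  | zero =>
    have : ∀ (c : Fin 2) (z : List (Fin 2)), c :: z ∉ visited a 0 := by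
      rintro c z ⟨j, hj, hj'⟩
      obtain rfl : j = 0 := by omega
      rw [h.1] at hj'
      simp at hj'
    exact ⟨fun c z hz => absurd hz (this c z), fun c z hz => absurd hz (this c z)⟩
  | succ k ih =>
    obtain ⟨h1, h2⟩ := ih ⟨h.1, fun j hj => h.2 j (by omega)⟩
    rw [visited_succ]
    rcases mem_nbrs (h.2 k (by omega)) with ⟨c, hc⟩ | ⟨d, hd⟩
    · refine ⟨hc ▸ h1.insert (visited_mem a k) c, fun e z hz => ?_⟩
      rcases hz with hz | hz
      · have hz' := hz
        rw [hc] at hz'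
        simp only [List.cons.injEq] at hz'
        exact ⟨k, by omega, hz'.2.symm, hz.symm⟩
      · obtain ⟨j, hj, hj'⟩ := h2 e z hz
        exact ⟨j, by omega, hj'⟩
    · have hmem : a (k + 1) ∈ visited a k := h1 d _ (hd ▸ visited_mem a k)
      rw [Set.insert_eq_of_mem hmem]
      refine ⟨h1, fun e z hz => ?_⟩
      obtain ⟨j, hj, hj'⟩ := h2 e z hz
      exact ⟨j, by omega, hj'⟩

lemma visited_of_traversed {a : ℕ → List (Fin 2)} {k : ℕ} {x y : List (Fin 2)}
    (h : binTraversed a k x y) : y ∈ visited a k := by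
  obtain ⟨j, hj, ⟨-, h⟩ | ⟨h, -⟩⟩ := h
  · exact ⟨j + 1, hj, h⟩
  · exact ⟨j, hj.le, h⟩

lemma weight_child {δ : ℝ} {a : ℕ → List (Fin 2)} {k : ℕ} (h : IsPath a k) (c : Fin 2) :
    binWeight δ a k (c :: a k) = if c :: a k ∈ visited a k then δ else 1 := by
  unfold binWeight
  congr 1
  refine propext ⟨visited_of_traversed, fun hm => ?_⟩
  obtain ⟨j, hj, h1⟩ := (visited_spec h).2 c _ hm
  exact ⟨j, hj, Or.inl h1⟩

lemma weight_parent {δ : ℝ} {a : ℕ → List (Fin 2)} {k : ℕ} (h : IsPath a k) {d : Fin 2}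
    {t : List (Fin 2)} (hx : a k = d :: t) : binWeight δ a k t = δ := by
  unfold binWeight
  rw [if_pos]
  obtain ⟨j, hj, h1, h2⟩ := (visited_spec h).2 d t (hx ▸ visited_mem a k)
  exact ⟨j, hj, Or.inr ⟨h1, h2.trans hx.symm⟩⟩

lemma sum_nbrs (d : Fin 2) (t : List (Fin 2)) {M : Type*} [AddCommMonoid M]
    (f : List (Fin 2) → M) :
    ∑ y ∈ binNbrs (d :: t), f y = (∑ c : Fin 2, f (c :: d :: t)) + f t := by
  have h1 : ∀ c : Fin 2, c :: d :: t ≠ t := fun c h => by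
    have := congrArg List.length h
    simp at this
    omega
  rw [binNbrs, if_neg (by simp), Finset.sum_insert, Finset.sum_insert, Finset.sum_singleton,
    Fin.sum_univ_two, add_assoc]
  · rfl
  · simpa using h1 1
  · simpa using h1 0

/-- The potential is a supermartingale for the transition probabilities `binStep`. -/
lemma step_super {δ : ℝ} (hδ : 0 < δ) {N : ℕ} (hN : 0 < N) {q : ℝ} (hq : 0 ≤ q)
    (hq1 : q * 2 ^ N ≤ 1)
    (hqE : ∀ A : ℝ, 0 ≤ A → A ≤ 2 ^ N →
      (1 - q * A) * (1 - q * (2 ^ N * hit δ N 1)) ≤ 1 - q * (A + 1))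
    {a : ℕ → List (Fin 2)} {k : ℕ} (ha : IsPath a k) (hx : a k ≠ []) :
    ∑ y ∈ binNbrs (a k), binStep δ a k y * pot δ N q (insert y (visited a k)) y y
      ≤ pot δ N q (visited a k) (a k) (a k) := by
  obtain ⟨d, t, hdt⟩ := List.exists_cons_of_ne_nil hx
  have hcl := (visited_spec ha).1
  have hmem : d :: t ∈ visited a k := hdt ▸ visited_mem a k
  have htm : t ∈ visited a k := hcl _ _ hmem
  have hs := pot_super hδ hN hq hq1 hqE hcl hmem
  set W := ∑ η ∈ binNbrs (a k), binWeight δ a k η with hW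
  have hWeq : W = (∑ c : Fin 2, if c :: d :: t ∈ visited a k then δ else 1) + δ := by
    rw [hW, hdt, sum_nbrs, weight_parent ha hdt]
    congr 1
    refine Finset.sum_congr rfl fun c _ => ?_
    have := weight_child (δ := δ) ha c
    rwa [hdt] at this
  have hWpos : 0 < W := by
    rw [hWeq]
    refine add_pos_of_nonneg_of_pos (Finset.sum_nonneg fun c _ => ?_) hδ
    split_ifs <;> linarith
  have hsum : ∑ y ∈ binNbrs (a k), binStep δ a k y * pot δ N q (insert y (visited a k)) y y
      = (∑ y ∈ binNbrs (a k), binWeight δ a k y * pot δ N q (insert y (visited a k)) y y) / W := by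
    rw [Finset.sum_div]
    refine Finset.sum_congr rfl fun y hy => ?_
    rw [binStep, if_pos hy, ← hW]
    ring
  rw [hsum, div_le_iff₀ hWpos, mul_comm _ W, hWeq]
  rw [hdt, sum_nbrs, weight_parent ha hdt, Set.insert_eq_of_mem htm]
  refine le_trans (le_of_eq ?_) hs
  congr 1
  refine Finset.sum_congr rfl fun c _ => ?_
  have := weight_child (δ := δ) ha c
  rw [hdt] at this
  rw [this]

lemma step_nonneg {δ : ℝ} (hδ : 0 < δ) (a : ℕ → List (Fin 2)) (k : ℕ) (y : List (Fin 2)) :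
    0 ≤ binStep δ a k y := by
  have hw : ∀ μ, 0 ≤ binWeight δ a k μ := fun μ => by
    unfold binWeight; split_ifs <;> linarith
  refine div_nonneg ?_ (Finset.sum_nonneg fun μ _ => hw μ)
  split_ifs
  · exact hw y
  · exact le_rfl

lemma binStep_congr {δ : ℝ} {a b : ℕ → List (Fin 2)} {k : ℕ} (h : ∀ j ≤ k, b j = a j) :
    binStep δ b k = binStep δ a k := by
  have ht : ∀ ν μ, binTraversed b k ν μ ↔ binTraversed a k ν μ := by
    intro ν μ
    refine exists_congr fun j => and_congr_right fun hj => ?_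
    rw [h j hj.le, h (j + 1) hj]
  have hw : binWeight δ b k = binWeight δ a k := by
    funext μ
    simp only [binWeight, ht, h k le_rfl]
  funext μ
  simp only [binStep, hw, h k le_rfl]

/-! ### The return probability -/

/-- Conditionally on the history up to time `k`, the walk returns to the root within `n` more steps
with probability at most the current potential. -/
theorem return_le {Ω : Type*} [MeasurableSpace Ω] (P : Measure Ω)
    {δ : ℝ} (hδ : 0 < δ) (X : ℕ → Ω → List (Fin 2))
    (hstep : ∀ (k : ℕ) (a : ℕ → List (Fin 2)),
      P {ω | ∀ j ≤ k + 1, X j ω = a j}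
        = P {ω | ∀ j ≤ k, X j ω = a j} * ENNReal.ofReal (binStep δ a k (a (k + 1))))
    {N : ℕ} (hN : 0 < N) {q : ℝ} (hq : 0 ≤ q) (hq1 : q * 2 ^ N ≤ 1)
    (hqE : ∀ A : ℝ, 0 ≤ A → A ≤ 2 ^ N →
      (1 - q * A) * (1 - q * (2 ^ N * hit δ N 1)) ≤ 1 - q * (A + 1))
    (n k : ℕ) (a : ℕ → List (Fin 2)) (ha : IsPath a k) (hx : a k ≠ []) :
    P {ω | (∀ j ≤ k, X j ω = a j) ∧ ∃ i, k < i ∧ i ≤ k + n ∧ X i ω = []}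
      ≤ P {ω | ∀ j ≤ k, X j ω = a j}
        * ENNReal.ofReal (pot δ N q (visited a k) (a k) (a k)) := by
  induction n generalizing k a with
  | zero =>
    have : {ω | (∀ j ≤ k, X j ω = a j) ∧ ∃ i, k < i ∧ i ≤ k + 0 ∧ X i ω = []} = ∅ := by
      ext ω
      simp only [Set.mem_ofPred_eq, Set.mem_empty_iff_false, iff_false]
      rintro ⟨-, i, h1, h2, -⟩
      omega
    rw [this, measure_empty]
    exact zero_le
  | succ n ih =>
    set H := P {ω | ∀ j ≤ k, X j ω = a j} with hH
    set G : Set Ω := {ω | (∀ j ≤ k, X j ω = a j) ∧ ∃ i, k < i ∧ i ≤ k + (n + 1) ∧ X i ω = []}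
      with hG
    -- Split according to the position `y` at time `k + 1`; the path `b y` extends `a` by `y`.
    have hcover : G ⊆ ⋃ y, G ∩ {ω | X (k + 1) ω = y} := fun ω hω =>
      Set.mem_iUnion.2 ⟨X (k + 1) ω, hω, rfl⟩
    let b : List (Fin 2) → ℕ → List (Fin 2) := fun y => Function.update a (k + 1) y
    have hb : ∀ y, ∀ j ≤ k, b y j = a j := fun y j hj =>
      Function.update_of_ne (by omega) _ _
    have hb1 : ∀ y, b y (k + 1) = y := fun y => Function.update_self _ _ _
    have hbH : ∀ y, P {ω | ∀ j ≤ k + 1, X j ω = b y j} = H * ENNReal.ofReal (binStep δ a k y) := by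
      intro y
      rw [hstep, hb1, binStep_congr (hb y), hH]
      congr 2
      ext ω
      exact forall₂_congr fun j hj => by rw [hb y j hj]
    have hsub : ∀ y, G ∩ {ω | X (k + 1) ω = y} ⊆ {ω | ∀ j ≤ k + 1, X j ω = b y j} := by
      rintro y ω ⟨⟨h1, -⟩, h2⟩ j hj
      rcases Nat.le_succ_iff.1 hj with h | h
      · rw [h1 j h, hb y j h]
      · rw [h, hb1]; exact h2
    have hnull : ∀ y ∉ binNbrs (a k), P (G ∩ {ω | X (k + 1) ω = y}) = 0 := by
      intro y hy
      refine measure_mono_null (hsub y) ?_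
      rw [hbH, binStep, if_neg hy]
      simp
    have hvis : ∀ y, visited (b y) (k + 1) = insert y (visited a k) := by
      intro y
      rw [visited_succ, hb1]
      congr 1
      ext s
      exact exists_congr fun j => and_congr_right fun hj => by rw [hb y j hj]
    have hmain : ∀ y ∈ binNbrs (a k), P (G ∩ {ω | X (k + 1) ω = y}) ≤
        H * ENNReal.ofReal (binStep δ a k y * pot δ N q (insert y (visited a k)) y y) := by
      intro y hy
      rw [ENNReal.ofReal_mul (step_nonneg hδ a k y), ← mul_assoc, ← hbH]
      by_cases hy0 : y = []
      -- At the root the potential is the empty product `1`.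
      · refine (measure_mono (hsub y)).trans ?_
        subst hy0
        simp [pot]
      · have hpath : IsPath (b y) (k + 1) := by
          refine ⟨(hb y 0 (by omega)).trans ha.1, fun j hj => ?_⟩
          rw [hb y j (by omega)]
          rcases Nat.lt_succ_iff_lt_or_eq.1 hj with h | h
          · rw [hb y (j + 1) h]; exact ha.2 j h
          · subst h; rw [hb1]; exact hy
        have := ih (k + 1) (b y) hpath (by rw [hb1]; exact hy0)
        rw [hb1, hvis] at this
        refine (measure_mono ?_).trans this
        rintro ω ⟨hω, hωy⟩
        refine ⟨hsub y ⟨hω, hωy⟩, ?_⟩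
        obtain ⟨-, i, h1, h2, h3⟩ := hω
        refine ⟨i, lt_of_le_of_ne h1 ?_, by omega, h3⟩
        rintro rfl
        exact hy0 (hωy.symm.trans h3)
    have hcl := (visited_spec ha).1
    have hpn : ∀ y ∈ binNbrs (a k), 0 ≤ pot δ N q (insert y (visited a k)) y y := by
      intro y hy
      refine pot_nonneg hδ hq hq1 ?_ (Set.mem_insert _ _) List.suffix_rfl
      rcases mem_nbrs hy with ⟨c, rfl⟩ | ⟨d, hd⟩
      · exact hcl.insert (visited_mem a k) c
      · rw [Set.insert_eq_of_mem (hcl d y (hd ▸ visited_mem a k))]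
        exact hcl
    calc P G ≤ P (⋃ y, G ∩ {ω | X (k + 1) ω = y}) := measure_mono hcover
      _ ≤ ∑' y, P (G ∩ {ω | X (k + 1) ω = y}) := measure_iUnion_le _
      _ = ∑ y ∈ binNbrs (a k), P (G ∩ {ω | X (k + 1) ω = y}) := tsum_eq_sum hnull
      _ ≤ ∑ y ∈ binNbrs (a k),
          H * ENNReal.ofReal (binStep δ a k y * pot δ N q (insert y (visited a k)) y y) :=
        Finset.sum_le_sum hmain
      _ = H * ENNReal.ofReal
          (∑ y ∈ binNbrs (a k), binStep δ a k y * pot δ N q (insert y (visited a k)) y y) := by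
        rw [ENNReal.ofReal_sum_of_nonneg fun y hy =>
          mul_nonneg (step_nonneg hδ a k y) (hpn y hy), Finset.mul_sum]
      _ ≤ _ := by
        gcongr
        exact step_super hδ hN hq hq1 hqE ha hx

end ORRW

/-- **Theorem 2 on the binary tree (Durrett–Kesten–Limic).** The once-reinforced random walk
with reinforcement parameter `δ > 0` on the infinite binary tree, started at the root, never
returns to the root with positive probability: it is transient. -/
theorem once_reinforced_walk_binary_tree_transient
    {Ω : Type*} [MeasurableSpace Ω] (P : Measure Ω) [IsProbabilityMeasure P]
    (δ : ℝ) (hδ : 0 < δ) (X : ℕ → Ω → List (Fin 2))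
    (hXmeas : ∀ (k : ℕ) (ν : List (Fin 2)), MeasurableSet {ω | X k ω = ν})
    (hstart : P {ω | X 0 ω = []} = 1)
    (hstep : ∀ (k : ℕ) (a : ℕ → List (Fin 2)),
      P {ω | ∀ j ≤ k + 1, X j ω = a j}
        = P {ω | ∀ j ≤ k, X j ω = a j} * ENNReal.ofReal (binStep δ a k (a (k + 1)))) :
    0 < P {ω | ∀ k : ℕ, 1 ≤ k → X k ω ≠ []} := by
  obtain ⟨N, hN, q, hq, hq1, hhit, hqE⟩ := ORRW.exists_params hδ
  -- It suffices to consider walks whose first step goes to `[0]`.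
  let a : ℕ → List (Fin 2) := fun j => if j = 1 then [0] else []
  have ha0 : a 0 = [] := rfl
  have ha1 : a 1 = [0] := rfl
  have hpath : ORRW.IsPath a 1 := by
    refine ⟨rfl, fun j hj => ?_⟩
    obtain rfl : j = 0 := by omega
    simp [ha0, ha1, binNbrs]
  set H := {ω | ∀ j ≤ 1, X j ω = a j} with hH
  have hvis0 : ([0] : List (Fin 2)) ∉ ORRW.visited a 0 := by
    rintro ⟨j, hj, h⟩
    obtain rfl : j = 0 := by omega
    simp [ha0] at h
  have hPH : P H ≠ 0 := by
    have h0 : P {ω | ∀ j ≤ 0, X j ω = a j} = 1 := by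
      rw [← hstart]
      congr 1
      ext ω
      simp [ha0]
    have hw : ∀ μ, binWeight δ a 0 μ = 1 := fun μ => by
      simp [binWeight, binTraversed]
    have hs : 0 < binStep δ a 0 (a 1) := by
      simp [binStep, hw, ha0, ha1, binNbrs]
    rw [hH, show (1 : ℕ) = 0 + 1 from rfl, hstep, h0, one_mul]
    simpa using hs
  set φ := ORRW.pot δ N q (ORRW.visited a 1) (a 1) (a 1) with hφdef
  have hφ : φ < 1 := by
    have hcl : ORRW.Closed (ORRW.visited a 0) :=
      (ORRW.visited_spec (k := 0) ⟨rfl, fun j hj => by omega⟩).1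
    rw [hφdef, ORRW.visited_succ, zero_add, ha1]
    simp only [ORRW.pot, List.length_nil, dvd_zero, if_true, one_mul]
    rw [ORRW.score_fresh δ hN hcl hvis0]
    have : 0 < q * (2 ^ N * ORRW.hit δ N 1) := by positivity
    linarith
  let R : ℕ → Set Ω := fun n => {ω | (∀ j ≤ 1, X j ω = a j) ∧ ∃ i, 1 < i ∧ i ≤ 1 + n ∧ X i ω = []}
  have hR : ∀ n, P (R n) ≤ P H * ENNReal.ofReal φ := fun n =>
    ORRW.return_le P hδ X hstep hN hq.le hq1 hqE n 1 a hpath (by simp [ha1])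
  have hmono : Monotone R := by
    rintro m n hmn ω ⟨h1, i, h2, h3, h4⟩
    exact ⟨h1, i, h2, by omega, h4⟩
  have hU : P (⋃ n, R n) ≤ P H * ENNReal.ofReal φ := by
    rw [hmono.measure_iUnion]
    exact iSup_le hR
  have hcover : H ⊆ {ω | ∀ k : ℕ, 1 ≤ k → X k ω ≠ []} ∪ ⋃ n, R n := by
    intro ω hω
    by_cases h : ∀ k : ℕ, 1 ≤ k → X k ω ≠ []
    · exact Or.inl h
    · push Not at h
      obtain ⟨i, hi, hi0⟩ := h
      refine Or.inr (Set.mem_iUnion.2 ⟨i, hω, i, lt_of_le_of_ne hi ?_, by omega, hi0⟩)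
      rintro rfl
      have := hω 1 le_rfl
      rw [hi0, ha1] at this
      simp at this
  by_contra hneg
  have hzero : P {ω | ∀ k : ℕ, 1 ≤ k → X k ω ≠ []} = 0 := by simpa using hneg
  have h1 : P H ≤ P H * ENNReal.ofReal φ := by
    calc P H ≤ _ := measure_mono hcover
      _ ≤ _ := measure_union_le _ _
      _ ≤ _ := by rw [hzero, zero_add]; exact hU
  have h2 : P H * ENNReal.ofReal φ < P H * 1 :=
    ENNReal.mul_lt_mul_right hPH (measure_ne_top P H) (by simpa using hφ)
  rw [mul_one] at h2
  exact absurd h1 (not_le.2 h2)
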